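/- Let σ > 0, K > 0, r ∈ ℝ, T > 0, and define V(t, s) = N(d_+) s − N(d_−) K e^{−r(T−t)} for 0 ≤ t < T, s > 0, where N is the standard normal cumulative distribution function and d_± = (ln(s/K) + (r ± σ²/2)(T − t))/(σ√(T − t)). Then for every s > 0, V(t, s) → max(s − K, 0) as t → T⁻; that is, the Black–Scholes formula attains the European call payoff at expiry. -/

import Mathlib

/-!
Put `τ = T - t`, which tends to `0⁺`. Then `d± = ln(s/K) (σ √τ)⁻¹ + ((r ± σ²/2)/σ) √τ`, where the
second term vanishes in the limit, so the sign of `ln(s/K)` decides the behaviour: for `s > K` both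
`d±` tend to `+∞` and `V → s - K`; for `s < K` both tend to `-∞` and `V → 0`; for `s = K` both tend
to `0`, and continuity of `N` gives `V → N(0) (s - K) = 0`. The limits of `N` at `±∞` come from
identifying `N` with the distribution function of Mathlib's standard Gaussian measure.
-/

open MeasureTheory

/-- The cumulative distribution function of the standard normal distribution,
`N(x) = ∫_{-∞}^x (2π)^{-1/2} e^{-z²/2} dz`. -/
noncomputable def stdNormalCDF (x : ℝ) : ℝ :=
  ∫ z in Set.Iic x, (2 * Real.pi) ^ (-(1 : ℝ) / 2) * Real.exp (-z ^ 2 / 2)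

open Filter Topology ProbabilityTheory

lemma stdNormalDensity_eq_gaussianPDFReal (z : ℝ) :
    (2 * Real.pi) ^ (-(1 : ℝ) / 2) * Real.exp (-z ^ 2 / 2) = gaussianPDFReal 0 1 z := by
  have h : (2 * Real.pi) ^ (-(1 : ℝ) / 2) = (√(2 * Real.pi))⁻¹ := by
    rw [Real.sqrt_eq_rpow, ← Real.rpow_neg (by positivity)]
    norm_num
  simp [gaussianPDFReal, h]

lemma stdNormalCDF_eq_setIntegral (x : ℝ) :
    stdNormalCDF x = ∫ z in Set.Iic x, gaussianPDFReal 0 1 z := by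
  simp only [stdNormalCDF, stdNormalDensity_eq_gaussianPDFReal]

lemma stdNormalCDF_eq_cdf : stdNormalCDF = cdf (gaussianReal 0 1) := by
  funext x
  rw [stdNormalCDF_eq_setIntegral, cdf_eq_real, measureReal_def,
    gaussianReal_apply_eq_integral _ one_ne_zero, ENNReal.toReal_ofReal]
  exact integral_nonneg fun z => gaussianPDFReal_nonneg 0 1 z

lemma continuous_stdNormalCDF : Continuous stdNormalCDF := by
  have hint := integrable_gaussianPDFReal 0 1
  have h : stdNormalCDF =
      fun x => stdNormalCDF 0 + ∫ z in (0 : ℝ)..x, gaussianPDFReal 0 1 z := by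
    funext x
    rw [← intervalIntegral.integral_Iic_sub_Iic hint.integrableOn hint.integrableOn,
      ← stdNormalCDF_eq_setIntegral, ← stdNormalCDF_eq_setIntegral]
    ring
  rw [h]
  exact continuous_const.add
    (intervalIntegral.continuous_primitive (fun a b => hint.intervalIntegrable) 0)

/-- Covers `d₊` and `d₋` at once, with `c = r ± σ²/2`, separating the singular part
from the part that vanishes at expiry. -/
lemma d_eq_singular_add_regular (L c σ τ : ℝ) (hσ : 0 < σ) (hτ : 0 < τ) :
    (L + c * τ) / (σ * √τ) = L * (σ * √τ)⁻¹ + c / σ * √τ := by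
  have h : 0 < √τ := Real.sqrt_pos.mpr hτ
  field_simp
  rw [Real.sq_sqrt hτ.le]

lemma tendsto_sqrt_time_to_expiry (T : ℝ) :
    Tendsto (fun t => √(T - t)) (𝓝[<] T) (𝓝[>] 0) := by
  refine tendsto_nhdsWithin_iff.mpr ⟨?_, ?_⟩
  · have h : Continuous fun t : ℝ => √(T - t) := by fun_prop
    simpa using (h.tendsto T).mono_left nhdsWithin_le_nhds
  · filter_upwards [self_mem_nhdsWithin] with t ht
    exact Real.sqrt_pos.mpr (sub_pos.mpr ht)

lemma tendsto_regular_part (c σ T : ℝ) :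
    Tendsto (fun t => c / σ * √(T - t)) (𝓝[<] T) (𝓝 0) := by
  simpa using ((tendsto_sqrt_time_to_expiry T).mono_right nhdsWithin_le_nhds).const_mul (c / σ)

lemma tendsto_singular_factor (σ T : ℝ) (hσ : 0 < σ) :
    Tendsto (fun t => (σ * √(T - t))⁻¹) (𝓝[<] T) atTop := by
  have h := (tendsto_inv_nhdsGT_zero.comp (tendsto_sqrt_time_to_expiry T)).const_mul_atTop
    (inv_pos.mpr hσ)
  refine h.congr fun t => ?_
  simp [mul_comm]

lemma d_eventuallyEq (L c σ T : ℝ) (hσ : 0 < σ) :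
    (fun t => L * (σ * √(T - t))⁻¹ + c / σ * √(T - t)) =ᶠ[𝓝[<] T]
      fun t => (L + c * (T - t)) / (σ * √(T - t)) := by
  filter_upwards [self_mem_nhdsWithin] with t ht
  exact (d_eq_singular_add_regular L c σ (T - t) hσ (sub_pos.mpr ht)).symm

lemma tendsto_d_atTop (L c σ T : ℝ) (hσ : 0 < σ) (hL : 0 < L) :
    Tendsto (fun t => (L + c * (T - t)) / (σ * √(T - t))) (𝓝[<] T) atTop :=
  (((tendsto_singular_factor σ T hσ).const_mul_atTop hL).atTop_add
    (tendsto_regular_part c σ T)).congr' (d_eventuallyEq L c σ T hσ)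

lemma tendsto_d_atBot (L c σ T : ℝ) (hσ : 0 < σ) (hL : L < 0) :
    Tendsto (fun t => (L + c * (T - t)) / (σ * √(T - t))) (𝓝[<] T) atBot :=
  (((tendsto_singular_factor σ T hσ).const_mul_atTop_of_neg hL).atBot_add
    (tendsto_regular_part c σ T)).congr' (d_eventuallyEq L c σ T hσ)

lemma tendsto_d_zero (c σ T : ℝ) (hσ : 0 < σ) :
    Tendsto (fun t => (0 + c * (T - t)) / (σ * √(T - t))) (𝓝[<] T) (𝓝 0) := by
  refine Tendsto.congr' (d_eventuallyEq 0 c σ T hσ) ?_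
  simpa using tendsto_regular_part c σ T

/-- `N(d₊)` and `N(d₋)` have a common limit `l` at expiry, whatever the drift coefficient `c`, and
`l (s - K)` is the call payoff. -/
lemma exists_common_limit (σ K T s : ℝ) (hσ : 0 < σ) (hK : 0 < K) (hs : 0 < s) :
    ∃ l : ℝ, l * (s - K) = max (s - K) 0 ∧ ∀ c : ℝ,
      Tendsto (fun t => stdNormalCDF ((Real.log (s / K) + c * (T - t)) / (σ * √(T - t))))
        (𝓝[<] T) (𝓝 l) := by
  rcases lt_trichotomy s K with h | rfl | h
  · refine ⟨0, by rw [max_eq_right (by linarith), zero_mul], fun c => ?_⟩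
    have hL : Real.log (s / K) < 0 := Real.log_neg (by positivity) ((div_lt_one hK).mpr h)
    rw [stdNormalCDF_eq_cdf]
    exact (tendsto_cdf_atBot _).comp (tendsto_d_atBot _ c σ T hσ hL)
  · refine ⟨stdNormalCDF 0, by simp, fun c => ?_⟩
    rw [div_self hs.ne', Real.log_one]
    exact (continuous_stdNormalCDF.tendsto 0).comp (tendsto_d_zero c σ T hσ)
  · refine ⟨1, by rw [max_eq_left (by linarith), one_mul], fun c => ?_⟩
    have hL : 0 < Real.log (s / K) := Real.log_pos ((one_lt_div hK).mpr h)
    rw [stdNormalCDF_eq_cdf]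
    exact (tendsto_cdf_atTop _).comp (tendsto_d_atTop _ c σ T hσ hL)

/-- **The Black–Scholes formula attains the European call payoff at expiry.** With
`d± (t, s) = (ln(s/K) + (r ± σ²/2)(T - t)) / (σ √(T - t))` and
`V(t, s) = N(d₊) s - N(d₋) K e^{-r(T-t)}`, one has for every `s > 0` that
`V(t, s) → max(s - K, 0)` as `t → T⁻`. -/
theorem black_scholes_formula_payoff_at_expiry
    (σ K r T : ℝ) (hσ : 0 < σ) (hK : 0 < K) (hT : 0 < T)
    (dp dm : ℝ → ℝ → ℝ)
    (hdp : ∀ t s, dp t s =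
      (Real.log (s / K) + (r + σ ^ 2 / 2) * (T - t)) / (σ * Real.sqrt (T - t)))
    (hdm : ∀ t s, dm t s =
      (Real.log (s / K) + (r - σ ^ 2 / 2) * (T - t)) / (σ * Real.sqrt (T - t)))
    (V : ℝ → ℝ → ℝ)
    (hV : ∀ t s, V t s =
      stdNormalCDF (dp t s) * s - stdNormalCDF (dm t s) * K * Real.exp (-r * (T - t))) :
    ∀ s : ℝ, 0 < s →
      Filter.Tendsto (fun t => V t s) (nhdsWithin T (Set.Iio T))
        (nhds (max (s - K) 0)) := by
  intro s hs
  obtain ⟨l, hl, hlim⟩ := exists_common_limit σ K T s hσ hK hs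
  have hdisc : Tendsto (fun t => Real.exp (-r * (T - t))) (𝓝[<] T) (𝓝 1) := by
    have h : Continuous fun t : ℝ => Real.exp (-r * (T - t)) := by fun_prop
    simpa using (h.tendsto T).mono_left nhdsWithin_le_nhds
  have h := ((hlim (r + σ ^ 2 / 2)).mul_const s).sub
    (((hlim (r - σ ^ 2 / 2)).mul_const K).mul hdisc)
  have hval : l * s - l * K * 1 = max (s - K) 0 := by
    rw [← hl]
    ring
  rw [hval] at h
  simpa only [hV, hdp, hdm] using h
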